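/- Let K be a number field, v a finite place of K, and m ≥ 5. If a₁, …, a_m are nonzero elements of the completion K_v, then the quadratic form a₁x₁² + ⋯ + a_mx_m² has a nontrivial zero over K_v. -/

import Mathlib

open IsDedekindDomain NumberField

namespace FiveVar
open IsLocalRing

/-- The diagonal form. -/
def qf {m : ℕ} {F : Type*} [Field F] (a x : Fin m → F) : F := ∑ i, a i * x i ^ 2
/-- The polar form. -/
def bf {m : ℕ} {F : Type*} [Field F] (a x y : Fin m → F) : F := ∑ i, 2 * a i * x i * y i

section
variable {m : ℕ} {F : Type*} [Field F]

lemma qf_comb (a x y : Fin m → F) (c d : F) :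
    qf a (c • x + d • y) = c ^ 2 * qf a x + d ^ 2 * qf a y + c * d * bf a x y := by
  simp only [qf, bf, Finset.mul_sum, ← Finset.sum_add_distrib]
  refine Finset.sum_congr rfl fun i _ => ?_
  simp only [Pi.add_apply, Pi.smul_apply, smul_eq_mul]
  ring

lemma qf_comb3 (a x y z : Fin m → F) (c d e : F) :
    qf a (c • x + d • y + e • z) = c ^ 2 * qf a x + d ^ 2 * qf a y + e ^ 2 * qf a z
      + c * d * bf a x y + c * e * bf a x z + d * e * bf a y z := by
  simp only [qf, bf, Finset.mul_sum, ← Finset.sum_add_distrib]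
  refine Finset.sum_congr rfl fun i _ => ?_
  simp only [Pi.add_apply, Pi.smul_apply, smul_eq_mul]
  ring

lemma qf_smul (a x : Fin m → F) (c : F) : qf a (c • x) = c ^ 2 * qf a x := by
  simp only [qf, Finset.mul_sum]
  refine Finset.sum_congr rfl fun i _ => ?_
  simp only [Pi.smul_apply, smul_eq_mul]
  ring

lemma qf_smul_left (a x : Fin m → F) (c : F) : qf (c • a) x = c * qf a x := by
  simp only [qf, Finset.mul_sum]
  refine Finset.sum_congr rfl fun i _ => ?_
  simp only [Pi.smul_apply, smul_eq_mul]
  ring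

lemma bf_smul_self (a x : Fin m → F) (c : F) : bf a x (c • x) = 2 * c * qf a x := by
  simp only [qf, bf, Finset.mul_sum]
  refine Finset.sum_congr rfl fun i _ => ?_
  simp only [Pi.smul_apply, smul_eq_mul]
  ring

lemma bf_single (a x : Fin m → F) (i : Fin m) (c : F) :
    bf a x (Pi.single i c) = 2 * a i * c * x i := by
  rw [bf, Finset.sum_eq_single i]
  · simp; ring
  · intro j _ hj; simp [hj]
  · simp

lemma qf_single (a : Fin m → F) (i : Fin m) (c : F) :
    qf a (Pi.single i c) = a i * c ^ 2 := by
  rw [qf, Finset.sum_eq_single i]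
  · simp
  · intro j _ hj; simp [hj]
  · simp
end

/-- Anisotropy. -/
def Aniso {m : ℕ} {F : Type*} [Field F] (a : Fin m → F) : Prop := ∀ x, qf a x = 0 → x = 0

lemma Aniso.smul {m : ℕ} {F : Type*} [Field F] {a : Fin m → F} (h : Aniso a) {c : F}
    (hc : c ≠ 0) : Aniso (c • a) := by
  intro x hx
  rw [qf_smul_left] at hx
  exact h x ((mul_eq_zero.mp hx).resolve_left hc)

/-- The weak Hensel property used. -/
def QHensel (O : Type*) [CommRing O] [IsLocalRing O] : Prop :=
  ∀ α ∈ maximalIdeal O, ∀ β ∈ maximalIdeal O, ∃ s : O, α * s ^ 2 + s + β = 0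

/-- Chevalley's theorem for ternary quadratic forms. -/
lemma cw (k : Type*) [Field k] [Finite k] (A B C D E G : k) :
    ∃ c : Fin 3 → k, c ≠ 0 ∧ c 0 ^ 2 * A + c 1 ^ 2 * B + c 2 ^ 2 * C
      + c 0 * c 1 * D + c 0 * c 2 * E + c 1 * c 2 * G = 0 := by
  classical
  have := Fintype.ofFinite k
  obtain ⟨p, hp⟩ := CharP.exists k
  have hpp : p.Prime := (CharP.char_is_prime_or_zero k p).resolve_right
    (CharP.char_ne_zero_of_finite k p)
  let f : MvPolynomial (Fin 3) k :=
    MvPolynomial.monomial (Finsupp.single 0 2) A + MvPolynomial.monomial (Finsupp.single 1 2) B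
    + MvPolynomial.monomial (Finsupp.single 2 2) C
    + MvPolynomial.monomial (Finsupp.single 0 1 + Finsupp.single 1 1) D
    + MvPolynomial.monomial (Finsupp.single 0 1 + Finsupp.single 2 1) E
    + MvPolynomial.monomial (Finsupp.single 1 1 + Finsupp.single 2 1) G
  have hf : f.totalDegree ≤ 2 := by
    have hs : ∀ (s : Fin 3 →₀ ℕ) (c : k), s.degree = 2 →
        MvPolynomial.monomial s c ∈ MvPolynomial.homogeneousSubmodule (Fin 3) k 2 := by
      intro s c h
      exact MvPolynomial.isHomogeneous_monomial c h
    have : f ∈ MvPolynomial.homogeneousSubmodule (Fin 3) k 2 := by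
      refine add_mem (add_mem (add_mem (add_mem (add_mem ?_ ?_) ?_) ?_) ?_) ?_ <;>
      · apply hs; simp [map_add]
    exact MvPolynomial.IsHomogeneous.totalDegree_le this
  have he : ∀ c : Fin 3 → k, MvPolynomial.eval c f = c 0 ^ 2 * A + c 1 ^ 2 * B + c 2 ^ 2 * C
      + c 0 * c 1 * D + c 0 * c 2 * E + c 1 * c 2 * G := by
    intro c
    simp [f, MvPolynomial.eval_monomial, Finsupp.prod_add_index', pow_add]
    ring
  have hd := char_dvd_card_solutions p (f := f) (by simp; omega)
  have h0 : MvPolynomial.eval (0 : Fin 3 → k) f = 0 := by rw [he]; simp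
  by_contra! hcon
  have : Fintype.card { x : Fin 3 → k // MvPolynomial.eval x f = 0 } = 1 := by
    rw [Fintype.card_eq_one_iff]
    refine ⟨⟨0, h0⟩, fun ⟨y, hy⟩ => ?_⟩
    ext1
    by_contra hne
    exact hcon y hne (by rw [← he]; exact hy)
  rw [this] at hd
  exact hpp.one_lt.ne' (Nat.dvd_one.mp hd)

section
variable {O : Type*} [CommRing O] [IsDomain O] [IsDiscreteValuationRing O]
  {F : Type*} [Field F] [Algebra O F] [IsFractionRing O F] {m : ℕ}

lemma key (hO : QHensel O) {a : Fin m → F} (ha : Aniso a) {x y : Fin m → F}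
    (hx : qf a x ∈ (algebraMap O F).range) (hy : qf a y ∈ (algebraMap O F).range) :
    bf a x y ∈ (algebraMap O F).range := by
  by_contra hb
  obtain ⟨r, hr⟩ := hx
  obtain ⟨s, hs⟩ := hy
  have hb0 : bf a x y ≠ 0 := fun h => hb (h ▸ zero_mem _)
  obtain ⟨t, ht⟩ : ∃ t : O, algebraMap O F t = (bf a x y)⁻¹ := by
    rcases ValuationRing.isInteger_or_isInteger O (bf a x y) with h | h
    · exact absurd h hb
    · exact h
  have htm : t ∈ maximalIdeal O := by
    rw [mem_maximalIdeal, mem_nonunits_iff]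
    rintro ⟨u, rfl⟩
    apply hb
    refine ⟨(u⁻¹ : Oˣ), ?_⟩
    rw [← inv_inv (bf a x y), ← ht]
    refine eq_inv_of_mul_eq_one_left ?_
    rw [← map_mul]; simp
  obtain ⟨u, hu⟩ := hO (r * t) (Ideal.mul_mem_left _ _ htm) (s * t) (Ideal.mul_mem_left _ _ htm)
  have hu' := congrArg (algebraMap O F) hu
  simp only [map_add, map_mul, map_pow, map_zero, hr, hs, ht] at hu'
  have h0 : qf a (algebraMap O F u • x + (1 : F) • y) = 0 := by
    rw [qf_comb]
    field_simp at hu'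
    linear_combination hu'
  have h1 := ha _ h0
  have hyx : y = (-algebraMap O F u) • x := by
    rw [one_smul] at h1
    rw [neg_smul]; exact (neg_eq_of_add_eq_zero_right h1).symm
  apply hb
  rw [hyx, bf_smul_self, ← hr]
  exact ⟨2 * (-u) * r, by simp only [map_mul, map_neg, map_ofNat]⟩

/-- The lattice of vectors of integral value. -/
def lat (hO : QHensel O) (a : Fin m → F) (ha : Aniso a) : Submodule O (Fin m → F) where
  carrier := {x | qf a x ∈ (algebraMap O F).range}
  zero_mem' := by simp [qf]
  add_mem' := by
    intro x y hx hy
    have := qf_comb a x y 1 1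
    simp only [one_smul, one_pow, one_mul] at this
    simp only [Set.mem_ofPred_eq] at hx hy ⊢
    rw [this]
    exact add_mem (add_mem hx hy) (key hO ha hx hy)
  smul_mem' := by
    intro c x hx
    simp only [Set.mem_ofPred_eq] at hx ⊢
    rw [← algebraMap_smul F c x, qf_smul]
    exact mul_mem (pow_mem (RingHom.mem_range_self _ c) 2) hx

lemma mem_lat (hO : QHensel O) (a : Fin m → F) (ha : Aniso a) (x : Fin m → F) :
    x ∈ lat hO a ha ↔ qf a x ∈ (algebraMap O F).range := Iff.rfl

lemma three [Finite (ResidueField O)] (hO : QHensel O) {a : Fin m → F} (ha : Aniso a)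
    {ϖ : O} (hϖ : Irreducible ϖ)
    (x : Fin 3 → Fin m → F) (hx : ∀ i, qf a (x i) ∈ (algebraMap O F).range) :
    ∃ c : Fin 3 → O, (∃ i, residue O (c i) ≠ 0) ∧
      qf ((algebraMap O F ϖ)⁻¹ • a) (∑ i, c i • x i) ∈ (algebraMap O F).range := by
  have hb := fun i j => key hO ha (hx i) (hx j)
  choose q hq using hx
  choose b hb using hb
  obtain ⟨c', hc0, hc⟩ := cw (ResidueField O) (residue O (q 0)) (residue O (q 1)) (residue O (q 2))
    (residue O (b 0 1)) (residue O (b 0 2)) (residue O (b 1 2))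
  choose c hcc using fun i => residue_surjective (R := O) (c' i)
  refine ⟨c, ?_, ?_⟩
  · obtain ⟨i, hi⟩ := Function.ne_iff.mp hc0
    exact ⟨i, by rw [hcc]; exact hi⟩
  · simp only [← hcc, ← map_pow, ← map_mul, ← map_add] at hc
    rw [residue_eq_zero_iff, hϖ.maximalIdeal_eq, Ideal.mem_span_singleton] at hc
    obtain ⟨d, hd⟩ := hc
    refine ⟨d, ?_⟩
    have hd' := congrArg (algebraMap O F) hd
    simp only [map_add, map_mul, map_pow, hq, hb] at hd'
    have h3 := qf_comb3 a (x 0) (x 1) (x 2) (algebraMap O F (c 0)) (algebraMap O F (c 1))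
      (algebraMap O F (c 2))
    simp only [algebraMap_smul] at h3
    have hp : algebraMap O F ϖ ≠ 0 := by
      simpa using hϖ.ne_zero
    rw [qf_smul_left, Fin.sum_univ_three, h3, hd']
    field_simp

lemma lattice (hO : QHensel O) (h2 : (2 : F) ≠ 0) {a : Fin m → F} (ha : Aniso a)
    (h0 : ∀ i, a i ≠ 0) : Submodule.IsLattice F (lat hO a ha) := by
  classical
  have hc : ∀ i, ∃ c : O, c ≠ 0 ∧ Pi.single i (algebraMap O F c) ∈ lat hO a ha := by
    intro i
    obtain ⟨n, d, hd, h⟩ := IsFractionRing.div_surjective (A := O) (a i)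
    have hd0 : algebraMap O F d ≠ 0 := by simpa using nonZeroDivisors.ne_zero hd
    refine ⟨d, nonZeroDivisors.ne_zero hd, ?_⟩
    rw [mem_lat, qf_single]
    refine ⟨n * d, ?_⟩
    rw [← h, map_mul]
    field_simp
  choose c hc0 hc using hc
  have hcF : ∀ i, algebraMap O F (c i) ≠ 0 := fun i => by simpa using hc0 i
  refine ⟨?_, ?_⟩
  · let g : Fin m → F := fun i => 2 * a i * algebraMap O F (c i)
    have hg : ∀ i, g i ≠ 0 := fun i => mul_ne_zero (mul_ne_zero h2 (h0 i)) (hcF i)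
    let N : Submodule O (Fin m → F) :=
      Submodule.span O (Set.range fun i => (Pi.single i (g i)⁻¹ : Fin m → F))
    have hN : N.FG := Submodule.fg_span (Set.finite_range _)
    have hle : lat hO a ha ≤ N := by
      intro x hx
      have hk := fun i => key hO ha hx (hc i)
      simp only [bf_single] at hk
      choose r hr using hk
      have : x = ∑ i, r i • (Pi.single i (g i)⁻¹ : Fin m → F) := by
        ext j
        rw [Finset.sum_apply, Finset.sum_eq_single j]
        · have := hg j
          simp only [Pi.smul_apply, Pi.single_eq_same, Algebra.smul_def, hr]
          change _ = g j * x j * _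
          field_simp
        · intro i _ hi; simp [Pi.single_eq_of_ne hi.symm]
        · simp
      rw [this]
      exact Submodule.sum_mem _ fun i _ => Submodule.smul_mem _ _ (Submodule.subset_span ⟨i, rfl⟩)
    have := Module.Finite.iff_fg.mpr hN
    have : IsNoetherian O (lat hO a ha) := isNoetherian_of_le hle
    exact Module.Finite.iff_fg.mp inferInstance
  · rw [eq_top_iff, ← (Pi.basisFun F (Fin m)).span_eq, Submodule.span_le]
    rintro _ ⟨i, rfl⟩
    have : Pi.basisFun F (Fin m) i = (algebraMap O F (c i))⁻¹ •
        (Pi.single i (algebraMap O F (c i)) : Fin m → F) := by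
      ext j
      by_cases hj : j = i
      · subst hj; simp [hcF]
      · simp [hj]
    rw [this]
    exact Submodule.smul_mem _ _ (Submodule.subset_span (hc i))

theorem main [Finite (ResidueField O)] (hO : QHensel O) (h2 : (2 : F) ≠ 0) {a : Fin m → F}
    (ha : Aniso a) (h0 : ∀ i, a i ≠ 0) : m ≤ 4 := by
  classical
  obtain ⟨ϖ, hϖ⟩ := IsDiscreteValuationRing.exists_irreducible O
  set p : F := algebraMap O F ϖ with hp
  have hp0 : p ≠ 0 := by simpa [hp] using hϖ.ne_zero
  have ha1 : Aniso (p⁻¹ • a) := ha.smul (inv_ne_zero hp0)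
  let M := lat hO a ha
  let M' := lat hO (p⁻¹ • a) ha1
  have hle : M' ≤ M := by
    intro x hx
    rw [mem_lat] at hx ⊢
    rw [qf_smul_left] at hx
    have : qf a x = p * (p⁻¹ * qf a x) := by field_simp
    rw [this]
    exact mul_mem (RingHom.mem_range_self _ ϖ) hx
  have : Submodule.IsLattice F M := lattice hO h2 ha h0
  have hfr : Module.finrank O M = m := by
    simpa using Submodule.IsLattice.finrank_of_pi F M
  let b : Module.Basis (Fin m) O M := Module.finBasisOfFinrankEq O M hfr
  let k := ResidueField O
  let φ : M →ₛₗ[residue O] (Fin m → k) :=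
    { toFun := fun x i => residue O (b.repr x i)
      map_add' := by intro x y; ext i; simp
      map_smul' := by intro c x; ext i; simp }
  have hφ : ∀ x i, φ x i = residue O (b.repr x i) := fun _ _ => rfl
  have hsurj : Function.Surjective φ := by
    intro w
    choose r hr using fun i => residue_surjective (R := O) (w i)
    refine ⟨b.equivFun.symm r, ?_⟩
    ext i
    rw [hφ, ← hr, ← b.equivFun_apply, LinearEquiv.apply_symm_apply]
  have : RingHomSurjective (residue O) := ⟨residue_surjective⟩
  let W : Submodule k (Fin m → k) := (M'.comap M.subtype).map φ
  have hind : ∀ (E : Type _) [AddCommGroup E] [Module k E] (f : Fin 3 → E) (c : Fin 3 → O),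
      LinearIndependent k f → (∃ i, residue O (c i) ≠ 0) → ∑ i, residue O (c i) • f i ≠ 0 := by
    intro E _ _ f c hf ⟨i, hi⟩ hs
    exact hi (Fintype.linearIndependent_iff.mp hf (fun i => residue O (c i)) hs i)
  have hW : Module.finrank k W ≤ 2 := by
    by_contra! hcon
    obtain ⟨f, hf⟩ := exists_linearIndependent_of_le_finrank (R := k) (M := W) (n := 3) hcon
    choose x hxM hx using fun i => (f i).2
    obtain ⟨c, hc, hcx⟩ := three hO ha1 hϖ (fun i => (x i : Fin m → F)) (fun i => hxM i)
    refine hind W f c hf hc ?_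
    set y : M := ∑ i, c i • x i with hy
    have hyy : (y : Fin m → F) = ∑ i, c i • (x i : Fin m → F) := by simp [hy]
    rw [← hyy] at hcx
    have hz : p⁻¹ • (y : Fin m → F) ∈ M := by
      rw [mem_lat, qf_smul]
      rw [qf_smul_left, qf_smul_left] at hcx
      convert hcx using 1
      ring
    have hyz : y = ϖ • (⟨_, hz⟩ : M) := by
      ext1
      change _ = ϖ • (p⁻¹ • (y : Fin m → F))
      rw [← algebraMap_smul F ϖ, ← hp, smul_inv_smul₀ hp0]
    have h1 : φ y = 0 := by
      rw [hyz, map_smulₛₗ, (residue_eq_zero_iff ϖ).mpr, zero_smul]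
      exact (mem_maximalIdeal _).mpr hϖ.not_isUnit
    ext1
    rw [ZeroMemClass.coe_zero, ← h1, hy, map_sum]
    simp only [map_smulₛₗ, hx]
    simp
  have hQ : Module.finrank k ((Fin m → k) ⧸ W) ≤ 2 := by
    by_contra! hcon
    obtain ⟨f, hf⟩ := exists_linearIndependent_of_le_finrank (R := k) (n := 3) hcon
    choose w hw using fun i => W.mkQ_surjective (f i)
    choose x hx using fun i => hsurj (w i)
    obtain ⟨c, hc, hcx⟩ := three hO ha hϖ (fun i => (x i : Fin m → F)) (fun i => (x i).2)
    refine hind _ f c hf hc ?_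
    have h1 : φ (∑ i, c i • x i) ∈ W := by
      refine ⟨_, ?_, rfl⟩
      change ((∑ i, c i • x i : M) : Fin m → F) ∈ M'
      rw [mem_lat]
      simpa using hcx
    rw [← Submodule.Quotient.mk_eq_zero] at h1
    rw [← h1, map_sum]
    simp only [map_smulₛₗ, hx, ← hw]
    change _ = W.mkQ _
    simp [map_sum]
  have := W.finrank_quotient_add_finrank
  simp at this
  omega
end
section
variable (K : Type*) [Field K] [NumberField K] (v : HeightOneSpectrum (𝓞 K))

lemma finres : Finite (ResidueField (v.adicCompletionIntegers K)) := by
  have hfin : Finite (𝓞 K ⧸ v.asIdeal) := v.asIdeal.finiteQuotientOfFreeOfNeBot v.ne_bot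
  have hval : ∀ x : v.adicCompletionIntegers K, x ∈ maximalIdeal _ ↔
      Valued.v (x : v.adicCompletion K) < 1 := by
    intro x
    rw [mem_maximalIdeal, mem_nonunits_iff,
      HeightOneSpectrum.adicCompletionIntegers.isUnit_iff_valued_eq_one]
    exact ⟨fun h => lt_of_le_of_ne x.2 h, fun h => h.ne⟩
  let f : 𝓞 K →+* ResidueField (v.adicCompletionIntegers K) :=
    (residue _).comp (algebraMap (𝓞 K) (v.adicCompletionIntegers K))
  have hker : ∀ r ∈ v.asIdeal, f r = 0 := by
    intro r hr
    change residue _ _ = 0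
    rw [residue_eq_zero_iff, hval]
    change Valued.v ((r : K) : v.adicCompletion K) < 1
    rw [HeightOneSpectrum.valuedAdicCompletion_eq_valuation']
    exact (HeightOneSpectrum.valuation_lt_one_iff_mem v r).mpr hr
  refine Finite.of_surjective (Ideal.Quotient.lift v.asIdeal f hker)
    (Ideal.Quotient.lift_surjective_of_surjective _ _ ?_)
  intro y
  obtain ⟨x, rfl⟩ := residue_surjective y
  obtain ⟨z, hz⟩ : ∃ z : K, Valued.v ((x : v.adicCompletion K) - algebraMap K _ z) < 1 := by
    have hop : IsOpen {w : v.adicCompletion K | Valued.v ((x : v.adicCompletion K) - w) < 1} := by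
      have := (Valued.isOpen_ball (v.adicCompletion K) 1).preimage
        (continuous_const.sub continuous_id : Continuous fun w => (x : v.adicCompletion K) - w)
      simpa using this
    obtain ⟨z, hz⟩ := (HeightOneSpectrum.denseRange_algebraMap K v).exists_mem_open hop
      ⟨x, by simp⟩
    exact ⟨z, hz⟩
  have hzv : v.valuation K z ≤ 1 := by
    rw [← HeightOneSpectrum.valuedAdicCompletion_eq_valuation']
    have : ((z : K) : v.adicCompletion K) = x - (x - algebraMap K _ z) := by
      rw [sub_sub_cancel]; rfl
    rw [this]
    exact (Valued.v.map_sub _ _).trans (max_le x.2 hz.le)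
  obtain ⟨r, hr⟩ := HeightOneSpectrum.exists_valuation_sub_lt_of_integer v hzv 1
  refine ⟨r, ?_⟩
  change residue _ _ = residue _ _
  rw [← sub_eq_zero, ← map_sub, residue_eq_zero_iff, hval]
  have h1 : Valued.v (algebraMap K (v.adicCompletion K) (algebraMap (𝓞 K) K r - z)) < 1 := by
    refine lt_of_eq_of_lt ?_ hr
    exact HeightOneSpectrum.valuedAdicCompletion_eq_valuation' v _
  have h2 : ((algebraMap (𝓞 K) (v.adicCompletionIntegers K) r - x :
      v.adicCompletionIntegers K) : v.adicCompletion K) =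
      algebraMap K (v.adicCompletion K) (algebraMap (𝓞 K) K r - z) - (x - algebraMap K _ z) := by
    rw [map_sub]
    change algebraMap K (v.adicCompletion K) (algebraMap (𝓞 K) K r) - (x : v.adicCompletion K) = _
    ring
  rw [h2]
  exact Valuation.map_sub_lt _ h1 hz

lemma hens (α β : v.adicCompletionIntegers K) (hα : α ∈ maximalIdeal _) (hβ : β ∈ maximalIdeal _) :
  ∃ s : v.adicCompletionIntegers K, α * s ^ 2 + s + β = 0 := by
  have hval : ∀ x : v.adicCompletionIntegers K, x ∈ maximalIdeal _ ↔
      ‖(x : v.adicCompletion K)‖ < 1 := by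
    intro x
    rw [mem_maximalIdeal, mem_nonunits_iff,
      HeightOneSpectrum.adicCompletionIntegers.isUnit_iff_valued_eq_one]
    rw [Valued.toNormedField.norm_lt_one_iff]
    exact ⟨fun h => lt_of_le_of_ne x.2 h, fun h => h.ne⟩
  have hle : ∀ x : v.adicCompletionIntegers K, ‖(x : v.adicCompletion K)‖ ≤ 1 := by
    intro x
    rw [Valued.toNormedField.norm_le_one_iff]; exact x.2
  have : CompleteSpace (v.adicCompletion K) := inferInstance
  have hcl : IsComplete (v.adicCompletionIntegers K : Set (v.adicCompletion K)) :=
    (Valued.isClosed_valuationSubring (v.adicCompletion K)).isComplete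
  let f : v.adicCompletion K → v.adicCompletion K := fun s => -β - α * s ^ 2
  have hmaps : Set.MapsTo f (v.adicCompletionIntegers K : Set (v.adicCompletion K))
      (v.adicCompletionIntegers K : Set (v.adicCompletion K)) := by
    intro s hs
    exact sub_mem (neg_mem β.2) (mul_mem α.2 (pow_mem hs 2))
  have hcon : ContractingWith ‖(α : v.adicCompletion K)‖₊ (hmaps.restrict f _ _) := by
    refine ⟨(hval α).mp hα, LipschitzWith.of_dist_le_mul fun x y => ?_⟩
    rw [Subtype.dist_eq, Subtype.dist_eq, dist_eq_norm, dist_eq_norm]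
    change ‖(-β - α * (x : v.adicCompletion K) ^ 2) -
      (-β - α * (y : v.adicCompletion K) ^ 2 : v.adicCompletion K)‖ ≤ _
    have h1 : (-β - α * (x : v.adicCompletion K) ^ 2) -
      (-β - α * (y : v.adicCompletion K) ^ 2 : v.adicCompletion K) =
      α * (x - y) * -(x + y) := by ring
    rw [h1, norm_mul, norm_mul, coe_nnnorm]
    refine mul_le_of_le_one_right (by positivity) ?_
    exact hle ⟨_, neg_mem (add_mem x.2 y.2)⟩
  obtain ⟨s, hs, hfix, -⟩ := hcon.exists_fixedPoint' hcl hmaps (zero_mem _) (edist_ne_top _ _)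
  refine ⟨⟨s, hs⟩, ?_⟩
  ext1
  have : -β - α * s ^ 2 = s := hfix
  change α * s ^ 2 + s + β = (0 : v.adicCompletion K)
  linear_combination -this
end
end FiveVar

/-- Over the completion of a number field at a finite place, every diagonal quadratic form in
at least five variables with nonzero coefficients has a nontrivial zero. -/
theorem isotropic_of_five_variables_adicCompletion
    (K : Type*) [Field K] [NumberField K] (v : HeightOneSpectrum (𝓞 K))
    (m : ℕ) (hm : 5 ≤ m) (a : Fin m → v.adicCompletion K) (ha : ∀ i, a i ≠ 0) :
    ∃ x : Fin m → v.adicCompletion K, x ≠ 0 ∧ (∑ i, a i * x i ^ 2) = 0 := by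
  by_contra! hcon
  have hA : FiveVar.Aniso a := by
    intro x hx
    by_contra hx0
    exact hcon x hx0 hx
  have := FiveVar.finres K v
  have : CharZero (v.adicCompletion K) :=
    charZero_of_injective_algebraMap (algebraMap K (v.adicCompletion K)).injective
  have h4 := FiveVar.main (O := v.adicCompletionIntegers K)
    (fun α hα β hβ => FiveVar.hens K v α β hα hβ) two_ne_zero hA ha
  omega
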